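/- Let R be a commutative ring and n ≥ 1. (i) For g, g' ∈ GL_n(R((u))) one has g·R[[u]]^n = g'·R[[u]]^n if and only if g^{-1}·g' ∈ GL_n(R[[u]]); in particular the stabilizer of the standard lattice R[[u]]^n under the action of GL_n(R((u))) on lattices is GL_n(R[[u]]). (ii) For every lattice L in R((u))^n there exist f₁,…,f_m ∈ R generating the unit ideal and, for each j, an element g_j ∈ GL_n(R_{f_j}((u))) such that the R_{f_j}[[u]]-submodule of R_{f_j}((u))^n generated by the image of L under the coefficientwise localization map equals g_j·R_{f_j}[[u]]^n. -/

import Mathlib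

noncomputable section
namespace Pap

variable (R : Type*) [CommRing R]

/-- `u^m` as a Laurent series. -/
def U (m : ℤ) : LaurentSeries R := HahnSeries.single m 1

/-- `R[[u]]` as a `R[[u]]`-submodule of `R((u))`. -/
def psRange : Submodule (PowerSeries R) (LaurentSeries R) :=
  LinearMap.range (Algebra.linearMap (PowerSeries R) (LaurentSeries R))

variable (n : ℕ)

/-- `R((u))^n`. -/
abbrev V := Fin n → LaurentSeries R

instance (priority := 10000) : AddCommGroup (V R n) := Pi.addCommGroup
instance (priority := 10000) : Module (PowerSeries R) (V R n) := Pi.module _ _ _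
instance (priority := 10000) : Module (LaurentSeries R) (V R n) := Pi.module _ _ _

/-- Multiplication by a Laurent series, as an `R[[u]]`-linear endomorphism of `R((u))^n`. -/
def smulV (a : LaurentSeries R) : V R n →ₗ[PowerSeries R] V R n where
  toFun x := a • x
  map_add' x y := smul_add a x y
  map_smul' c x := by
    funext i
    exact mul_smul_comm c a (x i)

/-- Image of a submodule under multiplication by a Laurent series. -/
def scaleL (a : LaurentSeries R) (L : Submodule (PowerSeries R) (V R n)) :
    Submodule (PowerSeries R) (V R n) := L.map (smulV R n a)

/-- The standard lattice `R[[u]]^n`. -/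
def stdLat : Submodule (PowerSeries R) (V R n) := Submodule.pi Set.univ fun _ => psRange R

/-- The quotient `B/(A ∩ B)`; for `A ≤ B` this is `B/A`. -/
abbrev subQuot (A B : Submodule (PowerSeries R) (V R n)) :=
  B ⧸ (A.comap B.subtype)

/-- A lattice in `R((u))^n`. -/
def IsLattice (L : Submodule (PowerSeries R) (V R n)) : Prop :=
  ∃ N : ℕ, scaleL R n (U R N) (stdLat R n) ≤ L ∧ L ≤ scaleL R n (U R (-(N : ℤ))) (stdLat R n) ∧
    Module.Finite R (RestrictScalars R (PowerSeries R)
      (subQuot R n L (scaleL R n (U R (-(N : ℤ))) (stdLat R n)))) ∧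
    Module.Projective R (RestrictScalars R (PowerSeries R)
      (subQuot R n L (scaleL R n (U R (-(N : ℤ))) (stdLat R n))))

/-- The action of an invertible matrix over `R((u))` on `R[[u]]`-submodules of `R((u))^n`. -/
def glLat (g : GL (Fin n) (LaurentSeries R)) (L : Submodule (PowerSeries R) (V R n)) :
    Submodule (PowerSeries R) (V R n) :=
  L.map ((Matrix.mulVecLin (g : Matrix (Fin n) (Fin n) (LaurentSeries R))).restrictScalars
    (PowerSeries R))

/-- Coefficientwise map of Laurent series along a ring map. -/
def lsMap {S : Type*} [CommRing S] (f : R →+* S) (x : LaurentSeries R) : LaurentSeries S where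
  coeff g := f (x.coeff g)
  isPWO_support' := x.isPWO_support'.mono (fun g hg => by
    simp only [Function.mem_support] at hg ⊢
    intro h; exact hg (by rw [h, map_zero]))

end Pap
end

/-!
An invertible matrix `g` maps `R[[u]]^n` into itself iff its columns lie in `R[[u]]^n`; applied to
`g⁻¹ g'` and `g'⁻¹ g` this decides when two translates of `R[[u]]^n` agree.

Let `L` be a lattice inside `M = u^{-N} R[[u]]^n`. Filtering `M / uL` through `L` and through `uM`
gives `L/uL ⊕ M/L ≃ M/L ⊕ M/uM` over `R`, because `M/L` and `M/uM ≃ R^n` are projective. Hence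
`L/uL` is finite projective of constant rank `n`, so after inverting some `f` outside any given
prime it is generated by `n` elements. As `u` lies in the Jacobson radical of `R_f[[u]]`, lifts of
these elements generate the `R_f[[u]]`-module spanned by `L`. That module contains
`u^N R_f[[u]]^n`, so its `n` generators span `R_f((u))^n` and are the columns of an invertible
matrix.
-/

section CommutativeAlgebra

open Module
open scoped Pointwise

section Spectrum

variable {R : Type*} [CommRing R]

lemma exists_fin_span_eq_top_of_forall_primeSpectrum {P : R → Prop}
    (h : ∀ p : PrimeSpectrum R, ∃ f ∉ p.asIdeal, P f) :
    ∃ (m : ℕ) (f : Fin m → R), Ideal.span (Set.range f) = ⊤ ∧ ∀ j, P (f j) := by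
  have hspan : Ideal.span {f | P f} = ⊤ := by
    by_contra hne
    obtain ⟨m, hm, hle⟩ := Ideal.exists_le_maximal _ hne
    obtain ⟨f, hfm, hf⟩ := h ⟨m, hm.isPrime⟩
    exact hfm (hle (Ideal.subset_span hf))
  obtain ⟨t, ht, ht_span⟩ := (Ideal.span_eq_top_iff_finite _).mp hspan
  refine ⟨t.card, fun j => t.equivFin.symm j, ?_, fun j => ht (t.equivFin.symm j).2⟩
  have hrange : Set.range (fun j => (t.equivFin.symm j : R)) = t :=
    (t.equivFin.symm.surjective.range_comp _).trans Subtype.range_coe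
  rw [hrange, ht_span]

variable {M M' : Type*} [AddCommGroup M] [Module R M] [AddCommGroup M'] [Module R M']

lemma exists_forall_smul_mem_span_of_isLocalizedModule (S : Submonoid R) (R' : Type*) [CommRing R']
    [Algebra R R'] [IsLocalization S R'] [Module R' M'] [IsScalarTower R R' M'] (g : M →ₗ[R] M')
    [IsLocalizedModule S g] {ι : Type*} [Finite ι] {b : ι → M'}
    (hb : Submodule.span R' (Set.range b) = ⊤) :
    ∃ e : ι → M, ∀ x, ∃ s ∈ S, s • x ∈ Submodule.span R (Set.range e) := by
  obtain ⟨s, hs⟩ := IsLocalizedModule.exist_integer_multiples_of_finite S g b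
  choose e he using hs
  refine ⟨e, fun x => ?_⟩
  obtain ⟨t, ht⟩ := multiple_mem_span_of_mem_localization_span S R' (Set.range b) (g x)
    (hb ▸ Submodule.mem_top)
  have hst : g ((s * t : S) • x) ∈ (Submodule.span R (Set.range e)).map g := by
    have := Submodule.smul_mem_pointwise_smul _ (s : R) _ ht
    rw [Submodule.smul_span, Set.smul_set_range] at this
    rw [Submodule.map_span, ← Set.range_comp, Function.comp_def]
    simpa only [he, Submonoid.smul_def, Submonoid.coe_mul, mul_smul, map_smul] using this
  obtain ⟨y, hy, hyx⟩ := hst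
  obtain ⟨c, hc⟩ := (IsLocalizedModule.eq_iff_exists S g).1 hyx
  refine ⟨c * (s * t : S), mul_mem c.2 (s * t).2, ?_⟩
  rw [mul_smul, ← Submonoid.smul_def (s * t), ← Submonoid.smul_def c, ← hc]
  exact Submodule.smul_mem _ (c : R) hy

lemma exists_forall_pow_smul_mem_span_of_rankAtStalk_eq [Module.Finite R M] [Projective R M]
    {n : ℕ} {p : PrimeSpectrum R} (hn : rankAtStalk M p = n) :
    ∃ f ∉ p.asIdeal, ∃ e : Fin n → M, ∀ x, ∃ k : ℕ, f ^ k • x ∈ Submodule.span R (Set.range e) := by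
  have := finitePresentation_of_projective R M
  have := free_of_flat_of_isLocalRing (R := Localization.AtPrime p.asIdeal)
    (P := LocalizedModule p.asIdeal.primeCompl M)
  obtain ⟨f, hf, b, -⟩ := FinitePresentation.exists_basis_localizedModule_powers
    p.asIdeal.primeCompl (LocalizedModule.mkLinearMap p.asIdeal.primeCompl M)
    (Localization.AtPrime p.asIdeal) (finBasisOfFinrankEq _ _ hn)
  obtain ⟨e, he⟩ := exists_forall_smul_mem_span_of_isLocalizedModule (.powers f) _
    (LocalizedModule.mkLinearMap (.powers f) M) b.span_eq
  refine ⟨f, hf, e, fun x => ?_⟩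
  obtain ⟨_, ⟨k, rfl⟩, hk⟩ := he x
  exact ⟨k, hk⟩

end Spectrum

section QuotSMulTop

variable {R A K M : Type*} [CommRing R] [CommRing A] [Algebra R A]
  [AddCommGroup K] [Module R K] [Module A K] [IsScalarTower R A K]
  [AddCommGroup M] [Module R M] [Module A M] [IsScalarTower R A M]

lemma nonempty_quotient_map_linearEquiv_prod (f : K →ₗ[A] M) (hf : Function.Injective f)
    (C : Submodule A K) [Projective R (M ⧸ f.range)] :
    Nonempty ((M ⧸ C.map f) ≃ₗ[R] (K ⧸ C) × (M ⧸ f.range)) := by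
  let i : K ⧸ C →ₗ[A] M ⧸ C.map f := C.mapQ (C.map f) f (C.le_comap_map f)
  let q : M ⧸ C.map f →ₗ[A] M ⧸ f.range := Submodule.factor LinearMap.map_le_range
  have hi : Function.Injective i := by
    rw [← LinearMap.ker_eq_bot, Submodule.ker_mapQ, Submodule.comap_map_eq_of_injective hf,
      Submodule.mkQ_map_self]
  have hq : Function.Surjective q := Submodule.factor_surjective _
  have hiq : Function.Exact i q := by
    rw [LinearMap.exact_iff, Submodule.ker_mapQ, Submodule.range_mapQ, Submodule.comap_id]
  obtain ⟨s, hs⟩ := projective_lifting_property (q.restrictScalars R) LinearMap.id hq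
  exact ⟨(Function.Exact.splitSurjectiveEquiv (f := i.restrictScalars R)
    (g := q.restrictScalars R) hiq hi ⟨s, hs⟩).1⟩

-- Both sides split `M ⧸ uf(K)`: the left one along `f(K)`, the right one along `uM`.
lemma nonempty_quotSMulTop_prod_linearEquiv (f : K →ₗ[A] M) (hf : Function.Injective f) {u : A}
    (hu : IsSMulRegular M u) [Projective R (M ⧸ f.range)] [Projective R (QuotSMulTop u M)] :
    Nonempty ((QuotSMulTop u K × (M ⧸ f.range)) ≃ₗ[R] (M ⧸ f.range) × QuotSMulTop u M) := by
  have hrange : (LinearMap.lsmul A M u).range = u • ⊤ := LinearMap.range_eq_map _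
  have hmap : (u • ⊤ : Submodule A K).map f = f.range.map (LinearMap.lsmul A M u) := by
    rw [Submodule.map_pointwise_smul, ← LinearMap.range_eq_map]
    rfl
  have : Projective R (M ⧸ (LinearMap.lsmul A M u).range) := hrange ▸ inferInstance
  obtain ⟨e₁⟩ := nonempty_quotient_map_linearEquiv_prod (R := R) f hf (u • ⊤)
  obtain ⟨e₂⟩ := nonempty_quotient_map_linearEquiv_prod (R := R) (LinearMap.lsmul A M u) hu f.range
  rw [hmap] at e₁
  rw [hrange] at e₂
  exact ⟨e₁.symm.trans e₂⟩

lemma finite_and_projective_quotSMulTop (f : K →ₗ[A] M) (hf : Function.Injective f) {u : A}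
    (hu : IsSMulRegular M u) [Module.Finite R (M ⧸ f.range)] [Projective R (M ⧸ f.range)]
    [Module.Finite R (QuotSMulTop u M)] [Projective R (QuotSMulTop u M)] :
    Module.Finite R (QuotSMulTop u K) ∧ Projective R (QuotSMulTop u K) := by
  obtain ⟨e⟩ := nonempty_quotSMulTop_prod_linearEquiv (R := R) f hf hu
  have := Module.Finite.equiv e.symm
  have := Projective.of_equiv e.symm
  exact ⟨.of_surjective (LinearMap.fst R _ (M ⧸ f.range)) LinearMap.fst_surjective,
    .of_split (LinearMap.inl R _ (M ⧸ f.range)) (LinearMap.fst R _ _) (LinearMap.fst_comp_inl ..)⟩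

lemma rankAtStalk_quotSMulTop_eq (f : K →ₗ[A] M) (hf : Function.Injective f) {u : A}
    (hu : IsSMulRegular M u) [Module.Finite R (M ⧸ f.range)] [Projective R (M ⧸ f.range)]
    [Module.Finite R (QuotSMulTop u M)] [Projective R (QuotSMulTop u M)] :
    rankAtStalk (R := R) (QuotSMulTop u K) = rankAtStalk (QuotSMulTop u M) := by
  obtain ⟨_, _⟩ := finite_and_projective_quotSMulTop (R := R) f hf hu
  obtain ⟨e⟩ := nonempty_quotSMulTop_prod_linearEquiv (R := R) f hf hu
  have h := rankAtStalk_eq_of_equiv e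
  rw [rankAtStalk_prod, rankAtStalk_prod, add_comm] at h
  exact add_left_cancel h

lemma exists_forall_pow_smul_mem_span_sup_smul_of_rankAtStalk_eq {u : A}
    [Module.Finite R (QuotSMulTop u K)] [Projective R (QuotSMulTop u K)] {n : ℕ}
    {p : PrimeSpectrum R} (hn : rankAtStalk (QuotSMulTop u K) p = n) :
    ∃ f ∉ p.asIdeal, ∃ e : Fin n → K, ∀ x, ∃ k : ℕ,
      f ^ k • x ∈ Submodule.span A (Set.range e) ⊔ u • ⊤ := by
  obtain ⟨f, hf, b, hb⟩ := exists_forall_pow_smul_mem_span_of_rankAtStalk_eq hn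
  choose e he using fun i => Submodule.mkQ_surjective (u • ⊤ : Submodule A K) (b i)
  refine ⟨f, hf, e, fun x => ?_⟩
  obtain ⟨k, hk⟩ := hb (Submodule.mkQ _ x)
  refine ⟨k, ?_⟩
  have hmap : Submodule.span R (Set.range b) ≤
      ((Submodule.span A (Set.range e)).map (u • ⊤ : Submodule A K).mkQ).restrictScalars R := by
    rw [Submodule.span_le]
    rintro _ ⟨i, rfl⟩
    exact ⟨e i, Submodule.subset_span ⟨i, rfl⟩, he i⟩
  rw [sup_comm, ← Submodule.comap_map_mkQ, Submodule.mem_comap, LinearMap.map_smul_of_tower]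
  exact hmap hk

end QuotSMulTop


section Nakayama

variable {A B M N : Type*} [CommRing A] [AddCommGroup M] [Module A M]
  [CommRing B] [AddCommGroup N] [Module B N]

lemma le_of_pow_smul_le_of_le_sup_smul {I : Ideal A} (hI : I ≤ Ideal.jacobson ⊥) (hI_fg : I.FG)
    {k : ℕ} {L P T : Submodule A M} (hP : P.FG) (hLP : L ≤ P) (hPL : I ^ k • P ≤ L)
    (h : L ≤ T ⊔ I • L) : L ≤ T := by
  have hpow (j : ℕ) : L ≤ T ⊔ I ^ j • L := by
    induction j with
    | zero => simp
    | succ j ih =>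
      calc L ≤ T ⊔ I ^ j • L := ih
        _ ≤ T ⊔ I ^ j • (T ⊔ I • L) := by gcongr
        _ ≤ T ⊔ I ^ (j + 1) • L := by
          rw [Submodule.smul_sup, ← Submodule.mul_smul, ← pow_succ]
          exact sup_le le_sup_left (sup_le_sup_right Submodule.smul_le_right _)
  have hPT : I ^ k • P ≤ T := by
    refine Submodule.le_of_le_smul_of_le_jacobson_bot (Submodule.FG.smul hI_fg.pow hP) hI ?_
    calc I ^ k • P ≤ L := hPL
      _ ≤ T ⊔ I ^ (k + 1) • L := hpow _
      _ ≤ T ⊔ I • I ^ k • P := by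
        rw [← Submodule.mul_smul, ← pow_succ']
        gcongr
  calc L ≤ T ⊔ I ^ k • L := hpow k
    _ ≤ T ⊔ I ^ k • P := by gcongr
    _ ≤ T := sup_le le_rfl hPT

lemma span_range_le_span_range_comp_sup_smul {R : Type*} [CommRing R] [Algebra R A] [Module R M]
    [IsScalarTower R A M] {σ : A →+* B} (g : M →ₛₗ[σ] N) {f : R}
    (hf : IsUnit (σ (algebraMap R A f))) {u : A} {ι : Type*} {e : ι → M}
    (he : ∀ x, ∃ k : ℕ, f ^ k • x ∈ Submodule.span A (Set.range e) ⊔ u • ⊤) :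
    Submodule.span B (Set.range g) ≤
      Submodule.span B (Set.range (g ∘ e)) ⊔ σ u • Submodule.span B (Set.range g) := by
  set T := Submodule.span B (Set.range (g ∘ e)) ⊔ σ u • Submodule.span B (Set.range g)
  have hle : Submodule.span A (Set.range e) ⊔ u • ⊤ ≤ T.comap g := by
    refine sup_le (Submodule.span_le.2 ?_) ?_
    · rintro _ ⟨i, rfl⟩
      exact Submodule.mem_sup_left (Submodule.subset_span ⟨i, rfl⟩)
    · rintro _ ⟨y, -, rfl⟩
      refine Submodule.mem_sup_right ⟨g y, Submodule.subset_span ⟨y, rfl⟩, ?_⟩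
      exact (map_smulₛₗ g u y).symm
  rw [Submodule.span_le]
  rintro _ ⟨x, rfl⟩
  obtain ⟨k, hk⟩ := he x
  have hgx : σ (algebraMap R A f) ^ k • g x ∈ T := by
    have := hle hk
    rwa [Submodule.mem_comap, ← algebraMap_smul A (f ^ k), map_smulₛₗ, map_pow, map_pow] at this
  exact (T.smul_mem_iff_of_isUnit (hf.pow k)).1 hgx

end Nakayama

section RestrictScalars

variable {R A M : Type*} [CommSemiring R] [Semiring A] [Algebra R A] [AddCommMonoid M]
  [Module R M] [Module A M] [IsScalarTower R A M]

/-- The identity map from the type synonym `RestrictScalars R A M` to `M`, when `M` already carries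
a compatible `R`-module structure. It turns the finiteness conditions of `Pap.IsLattice` into
conditions on the quotient itself. -/
def restrictScalarsLinearEquiv : RestrictScalars R A M ≃ₗ[R] M where
  __ := RestrictScalars.addEquiv R A M
  map_smul' r x := (RestrictScalars.addEquiv_map_smul _ _ _ r x).trans (algebraMap_smul A r _)

end RestrictScalars

end CommutativeAlgebra

namespace Pap

open scoped Pointwise

section LaurentSeries

variable {R : Type*} [CommRing R]

instance : IsScalarTower R (PowerSeries R) (LaurentSeries R) :=
  .of_algebraMap_smul fun r x => by
    rw [Algebra.smul_def, PowerSeries.algebraMap_apply, LaurentSeries.coe_algebraMap,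
      HahnSeries.ofPowerSeries_C, HahnSeries.C_mul_eq_smul, Algebra.algebraMap_self_apply]

lemma mem_psRange_iff {x : LaurentSeries R} : x ∈ psRange R ↔ ∀ d < 0, x.coeff d = 0 := by
  constructor
  · rintro ⟨y, rfl⟩ d hd
    exact (PowerSeries.coeff_coe y d).trans (if_pos hd)
  · intro hx
    refine ⟨PowerSeries.mk fun k => x.coeff k, ?_⟩
    ext d
    refine (PowerSeries.coeff_coe _ d).trans ?_
    split_ifs with hd
    · exact (hx d hd).symm
    · rw [PowerSeries.coeff_mk, Int.natAbs_of_nonneg (not_lt.1 hd)]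

lemma U_mul_U (a b : ℤ) : U R a * U R b = U R (a + b) :=
  HahnSeries.single_mul_single.trans (by rw [mul_one]; rfl)

lemma U_neg_mul_U (a : ℤ) : U R (-a) * U R a = 1 := by
  rw [U_mul_U, neg_add_cancel]
  rfl

lemma algebraMap_X_pow (k : ℕ) :
    algebraMap (PowerSeries R) (LaurentSeries R) (PowerSeries.X ^ k) = U R k := by
  rw [LaurentSeries.coe_algebraMap, HahnSeries.ofPowerSeries_X_pow]
  rfl

lemma X_mem_jacobson_bot : (PowerSeries.X : PowerSeries R) ∈ Ideal.jacobson ⊥ := by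
  rw [Ideal.mem_jacobson_bot]
  intro y
  rw [PowerSeries.isUnit_iff_constantCoeff]
  simp

end LaurentSeries

section Lattice

variable {R : Type*} [CommRing R] {n : ℕ}

variable (R n) in
/-- The lattice `u^m R[[u]]^n`, in the form in which it occurs in `IsLattice`. -/
noncomputable abbrev shiftLat (m : ℤ) : Submodule (PowerSeries R) (V R n) :=
  scaleL R n (U R m) (stdLat R n)

lemma mem_stdLat_iff {x : V R n} : x ∈ stdLat R n ↔ ∀ i, x i ∈ psRange R := by
  simp only [stdLat, Submodule.mem_pi, Set.mem_univ, forall_const]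

lemma mem_scaleL_U_iff {L : Submodule (PowerSeries R) (V R n)} {m : ℤ} {x : V R n} :
    x ∈ scaleL R n (U R m) L ↔ U R (-m) • x ∈ L := by
  constructor
  · rintro ⟨y, hy, rfl⟩
    change U R (-m) • U R m • y ∈ L
    rwa [smul_smul, U_neg_mul_U, one_smul]
  · intro hx
    refine ⟨_, hx, ?_⟩
    change U R m • U R (-m) • x = x
    rw [smul_smul, mul_comm, U_neg_mul_U, one_smul]

lemma mem_shiftLat_iff {m : ℤ} {x : V R n} :
    x ∈ shiftLat R n m ↔ ∀ i, ∀ d < m, (x i).coeff d = 0 := by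
  rw [mem_scaleL_U_iff, mem_stdLat_iff]
  refine forall_congr' fun i => mem_psRange_iff.trans ?_
  have hcoeff (d : ℤ) : ((U R (-m) • x) i).coeff d = (x i).coeff (d + m) := by
    rw [Pi.smul_apply, smul_eq_mul, U, HahnSeries.coeff_single_mul, one_mul, sub_neg_eq_add]
  simp only [hcoeff]
  refine ⟨fun h d hd => ?_, fun h d hd => h _ (by lia)⟩
  simpa only [sub_add_cancel] using h (d - m) (by lia)

lemma X_pow_smul_eq_U_smul (k : ℕ) (x : V R n) :
    (PowerSeries.X ^ k : PowerSeries R) • x = U R k • x := by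
  rw [← algebraMap_X_pow, algebraMap_smul]

lemma X_pow_smul_eq_scaleL_U (k : ℕ) (L : Submodule (PowerSeries R) (V R n)) :
    (PowerSeries.X ^ k : PowerSeries R) • L = scaleL R n (U R k) L := by
  ext x
  simp only [Submodule.mem_smul_pointwise_iff_exists, X_pow_smul_eq_U_smul]
  rfl

lemma scaleL_U_scaleL_U (a b : ℤ) (L : Submodule (PowerSeries R) (V R n)) :
    scaleL R n (U R a) (scaleL R n (U R b) L) = scaleL R n (U R (a + b)) L := by
  ext x
  rw [mem_scaleL_U_iff, mem_scaleL_U_iff, mem_scaleL_U_iff, smul_smul, U_mul_U, ← neg_add_rev]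

lemma X_pow_smul_shiftLat (k : ℕ) (m : ℤ) :
    (PowerSeries.X ^ k : PowerSeries R) • shiftLat R n m = shiftLat R n (k + m) := by
  rw [X_pow_smul_eq_scaleL_U, scaleL_U_scaleL_U]

lemma stdLat_eq_span :
    stdLat R n = Submodule.span (PowerSeries R) (Set.range fun i => Pi.single i 1) := by
  have hsingle (i : Fin n) :
      (Algebra.linearMap (PowerSeries R) (LaurentSeries R)).compLeft (Fin n) (Pi.single i 1) =
        Pi.single i 1 := by
    ext1 j
    exact (Pi.apply_single (fun _ => algebraMap (PowerSeries R) (LaurentSeries R))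
      (fun _ => map_zero _) i 1 j).trans (by rw [map_one])
  rw [stdLat, psRange, ← LinearMap.range_compLeft, LinearMap.range_eq_map,
    ← (Pi.basisFun (PowerSeries R) (Fin n)).span_eq, Submodule.map_span, ← Set.range_comp]
  simp only [Function.comp_def, Pi.basisFun_apply, hsingle]

lemma shiftLat_eq_span (m : ℤ) : shiftLat R n m =
    Submodule.span (PowerSeries R) (Set.range fun i => Pi.single i (U R m)) := by
  have hsingle (i : Fin n) : smulV R n (U R m) (Pi.single i 1) = Pi.single i (U R m) := by
    change U R m • (Pi.single i 1 : V R n) = _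
    rw [← Pi.single_smul, smul_eq_mul, mul_one]
  rw [shiftLat, scaleL, stdLat_eq_span, Submodule.map_span, ← Set.range_comp]
  simp only [Function.comp_def, hsingle]

lemma shiftLat_fg (m : ℤ) : (shiftLat R n m).FG := by
  rw [shiftLat_eq_span]
  exact Submodule.fg_span (Set.finite_range _)

lemma isSMulRegular_shiftLat (m : ℤ) :
    IsSMulRegular (shiftLat R n m) (PowerSeries.X : PowerSeries R) := by
  have hX : IsUnit (U R (1 : ℕ)) := .of_mul_eq_one_right _ (U_neg_mul_U 1)
  intro x y hxy
  refine Subtype.ext (hX.isSMulRegular (V R n) ?_)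
  simpa only [Subtype.ext_iff, Submodule.coe_smul, ← X_pow_smul_eq_U_smul, pow_one] using hxy

lemma nonempty_quotSMulTop_shiftLat_linearEquiv (m : ℤ) :
    Nonempty (QuotSMulTop (PowerSeries.X : PowerSeries R) (shiftLat R n m) ≃ₗ[R] (Fin n → R)) := by
  let π : shiftLat R n m →ₗ[R] (Fin n → R) :=
    (LinearMap.pi fun i => HahnSeries.coeff.linearMap m ∘ₗ LinearMap.proj i) ∘ₗ
      (shiftLat R n m).subtype.restrictScalars R
  have hπ_surj : Function.Surjective π := by
    intro c
    refine ⟨⟨fun i => HahnSeries.single m (c i), mem_shiftLat_iff.2 fun i d hd => ?_⟩, ?_⟩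
    · exact HahnSeries.coeff_single_of_ne hd.ne
    · exact funext fun i => HahnSeries.coeff_single_same m (c i)
  have hcomap : ((PowerSeries.X : PowerSeries R) • ⊤ : Submodule _ (shiftLat R n m)) =
      (shiftLat R n (1 + m)).comap (shiftLat R n m).subtype := by
    rw [← Submodule.comap_map_eq_of_injective (shiftLat R n m).subtype_injective (_ • ⊤),
      Submodule.map_pointwise_smul, Submodule.map_subtype_top, ← pow_one PowerSeries.X,
      X_pow_smul_shiftLat, Nat.cast_one]
  have hker : ((PowerSeries.X : PowerSeries R) • ⊤ :
      Submodule (PowerSeries R) (shiftLat R n m)).restrictScalars R = π.ker := by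
    ext x
    rw [hcomap, Submodule.restrictScalars_mem, Submodule.mem_comap, mem_shiftLat_iff,
      LinearMap.mem_ker, funext_iff]
    refine forall_congr' fun i => ⟨fun h => h m (by lia), fun h d hd => ?_⟩
    obtain hdm | rfl := (show d ≤ m by lia).lt_or_eq
    · exact mem_shiftLat_iff.1 x.2 i d hdm
    · exact h
  exact ⟨(Submodule.Quotient.restrictScalarsEquiv R _).symm ≪≫ₗ
    Submodule.quotEquivOfEq _ _ hker ≪≫ₗ π.quotKerEquivOfSurjective hπ_surj⟩

open Module in
lemma IsLattice.exists_forall_pow_smul_mem_span_sup_smul {L : Submodule (PowerSeries R) (V R n)}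
    (hL : IsLattice R n L) (p : PrimeSpectrum R) :
    ∃ f ∉ p.asIdeal, ∃ e : Fin n → L, ∀ x, ∃ k : ℕ, f ^ k • x ∈
      Submodule.span (PowerSeries R) (Set.range e) ⊔ (PowerSeries.X : PowerSeries R) • ⊤ := by
  obtain ⟨N, -, hLN, hfin, hproj⟩ := hL
  let ι := Submodule.inclusion hLN
  have hι : Function.Injective ι := Submodule.inclusion_injective hLN
  obtain ⟨e⟩ := nonempty_quotSMulTop_shiftLat_linearEquiv (R := R) (n := n) (-N)
  have := Module.Finite.equiv e.symm
  have := Projective.of_equiv e.symm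
  have : Module.Finite R (_ ⧸ ι.range) := by
    rw [Submodule.range_inclusion]
    exact .equiv (restrictScalarsLinearEquiv (A := PowerSeries R))
  have : Projective R (_ ⧸ ι.range) := by
    rw [Submodule.range_inclusion]
    exact .of_equiv (restrictScalarsLinearEquiv (A := PowerSeries R))
  have hreg := isSMulRegular_shiftLat (R := R) (n := n) (-N)
  obtain ⟨_, _⟩ := finite_and_projective_quotSMulTop (R := R) ι hι hreg
  refine exists_forall_pow_smul_mem_span_sup_smul_of_rankAtStalk_eq ?_
  have := p.nontrivial
  rw [rankAtStalk_quotSMulTop_eq ι hι hreg, rankAtStalk_eq_of_equiv e,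
    rankAtStalk_eq_finrank_of_free]
  simp

end Lattice

section LaurentMap

variable {R S : Type*} [CommRing R] [CommRing S] {n : ℕ}

lemma lsMap_smul (h : R →+* S) (a : PowerSeries R) (x : LaurentSeries R) :
    lsMap R h (a • x) = PowerSeries.map h a • lsMap R h x := by
  have ha : lsMap R h (algebraMap _ _ a) = algebraMap _ _ (PowerSeries.map h a) := by
    ext d
    change h (HahnSeries.coeff (a : LaurentSeries R) d) =
      HahnSeries.coeff (PowerSeries.map h a : LaurentSeries S) d
    simp only [PowerSeries.coeff_coe, PowerSeries.coeff_map, apply_ite h, map_zero]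
  rw [Algebra.smul_def, Algebra.smul_def, ← ha]
  exact HahnSeries.map_mul (h : R →ₙ+* S)

variable (n) in
/-- Coefficientwise base change `R((u))^n → S((u))^n` along `h : R →+* S`, bundled as a semilinear
map over `R[[u]] → S[[u]]` so that spans and multiplication by `u` can be carried along it. -/
noncomputable def lsMapV (h : R →+* S) : V R n →ₛₗ[PowerSeries.map h] V S n where
  toFun x i := lsMap R h (x i)
  map_add' _ _ := funext fun _ => HahnSeries.map_add (h : R →+ S)
  map_smul' a x := funext fun i => lsMap_smul h a (x i)

lemma lsMapV_single (h : R →+* S) (m : ℤ) (i : Fin n) :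
    lsMapV n h (Pi.single i (U R m)) = Pi.single i (U S m) := by
  have hU : lsMap R h (U R m) = U S m :=
    (HahnSeries.map_single (h : ZeroHom R S)).trans (congrArg _ h.map_one)
  have hzero : lsMap R h 0 = 0 := HahnSeries.map_zero (h : ZeroHom R S)
  ext1 j
  exact (Pi.apply_single (fun _ => lsMap R h) (fun _ => hzero) i _ j).trans (by rw [hU])

lemma lsMapV_mem_shiftLat (h : R →+* S) {m : ℤ} {x : V R n} (hx : x ∈ shiftLat R n m) :
    lsMapV n h x ∈ shiftLat S n m := by
  rw [mem_shiftLat_iff] at hx ⊢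
  exact fun i d hd => (congrArg h (hx i d hd)).trans h.map_zero

lemma shiftLat_le_span_image_lsMapV (h : R →+* S) {m : ℤ} {L : Submodule (PowerSeries R) (V R n)}
    (hL : shiftLat R n m ≤ L) :
    shiftLat S n m ≤ Submodule.span (PowerSeries S) (lsMapV n h '' L) := by
  rw [shiftLat_eq_span, Submodule.span_le]
  rintro _ ⟨i, rfl⟩
  rw [shiftLat_eq_span, Submodule.span_le] at hL
  exact Submodule.subset_span ⟨_, hL ⟨i, rfl⟩, lsMapV_single h m i⟩

lemma span_image_lsMapV_le_shiftLat (h : R →+* S) {m : ℤ} {L : Submodule (PowerSeries R) (V R n)}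
    (hL : L ≤ shiftLat R n m) :
    Submodule.span (PowerSeries S) (lsMapV n h '' L) ≤ shiftLat S n m := by
  rw [Submodule.span_le]
  rintro _ ⟨x, hx, rfl⟩
  exact lsMapV_mem_shiftLat h (hL hx)

lemma span_image_lsMapV_eq_span_range {h : R →+* S} {f : R} (hf : IsUnit (h f)) {N : ℕ}
    {L : Submodule (PowerSeries R) (V R n)} (hNL : shiftLat R n N ≤ L)
    (hLN : L ≤ shiftLat R n (-N)) {ι : Type*} {e : ι → L}
    (he : ∀ x, ∃ k : ℕ, f ^ k • x ∈
      Submodule.span (PowerSeries R) (Set.range e) ⊔ (PowerSeries.X : PowerSeries R) • ⊤) :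
    Submodule.span (PowerSeries S) (lsMapV n h '' L) =
      Submodule.span (PowerSeries S) (Set.range fun i => lsMapV n h (e i)) := by
  let g : L →ₛₗ[PowerSeries.map h] V S n := lsMapV n h ∘ₛₗ L.subtype
  have hg : Set.range g = lsMapV n h '' L := by
    rw [Set.image_eq_range]
    rfl
  have hX : Ideal.span {PowerSeries.X} ≤ Ideal.jacobson (⊥ : Ideal (PowerSeries S)) :=
    (Ideal.span_singleton_le_iff_mem _).2 X_mem_jacobson_bot
  have hfX : IsUnit (PowerSeries.map h (algebraMap R (PowerSeries R) f)) := by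
    rw [PowerSeries.algebraMap_apply, PowerSeries.map_C]
    exact hf.map PowerSeries.C
  refine le_antisymm ?_ (Submodule.span_le.2 ?_)
  · refine le_of_pow_smul_le_of_le_sup_smul hX (Submodule.fg_span_singleton _) (k := 2 * N)
      (shiftLat_fg (-N)) (span_image_lsMapV_le_shiftLat h hLN) ?_ ?_
    · rw [Ideal.span_singleton_pow, Submodule.ideal_span_singleton_smul, X_pow_smul_shiftLat]
      convert shiftLat_le_span_image_lsMapV h hNL using 2
      push_cast
      ring
    · rw [Submodule.ideal_span_singleton_smul]
      have := span_range_le_span_range_comp_sup_smul g hfX he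
      rwa [hg, PowerSeries.map_X] at this
  · rintro _ ⟨i, rfl⟩
    exact Submodule.subset_span ⟨e i, (e i).2, rfl⟩

end LaurentMap

section GeneralLinear

variable {R : Type*} [CommRing R] {n : ℕ}

lemma glLat_stdLat_eq_span (g : GL (Fin n) (LaurentSeries R)) : glLat R n g (stdLat R n) =
    Submodule.span (PowerSeries R)
      (Set.range (g : Matrix (Fin n) (Fin n) (LaurentSeries R)).col) := by
  rw [glLat, stdLat_eq_span, Submodule.map_span, ← Set.range_comp]
  congr 2
  exact funext (Matrix.mulVec_single_one _)

lemma glLat_mul (g g' : GL (Fin n) (LaurentSeries R)) (L : Submodule (PowerSeries R) (V R n)) :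
    glLat R n (g * g') L = glLat R n g (glLat R n g' L) := by
  rw [glLat, glLat, glLat, ← Submodule.map_comp, Units.val_mul, Matrix.mulVecLin_mul]
  rfl

lemma glLat_one (L : Submodule (PowerSeries R) (V R n)) : glLat R n 1 L = L := by
  rw [glLat, Units.val_one, Matrix.mulVecLin_one]
  exact Submodule.map_id L

lemma glLat_le_glLat_iff {g g' : GL (Fin n) (LaurentSeries R)}
    {L L' : Submodule (PowerSeries R) (V R n)} :
    glLat R n g L ≤ glLat R n g' L' ↔ glLat R n (g'⁻¹ * g) L ≤ L' := by
  constructor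
  · intro h
    rw [glLat_mul, ← glLat_one L', ← inv_mul_cancel g', glLat_mul]
    exact Submodule.map_mono h
  · intro h
    rw [← mul_inv_cancel_left g' g, glLat_mul]
    exact Submodule.map_mono h

lemma glLat_stdLat_le_stdLat_iff {g : GL (Fin n) (LaurentSeries R)} :
    glLat R n g (stdLat R n) ≤ stdLat R n ↔
      ∀ i j, (g : Matrix (Fin n) (Fin n) (LaurentSeries R)) i j ∈ psRange R := by
  rw [glLat_stdLat_eq_span, Submodule.span_le, Set.range_subset_iff, forall_comm]
  exact forall_congr' fun j => mem_stdLat_iff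

lemma exists_glLat_stdLat_eq_span_range {m : ℤ} {v : Fin n → V R n}
    (hv : shiftLat R n m ≤ Submodule.span (PowerSeries R) (Set.range v)) :
    ∃ g, glLat R n g (stdLat R n) = Submodule.span (PowerSeries R) (Set.range v) := by
  let G : Matrix (Fin n) (Fin n) (LaurentSeries R) := (Matrix.of v).transpose
  have htop : Submodule.span (LaurentSeries R) (Set.range v) = ⊤ := by
    rw [eq_top_iff, ← (Pi.basisFun (LaurentSeries R) (Fin n)).span_eq, Submodule.span_le]
    rintro _ ⟨i, rfl⟩
    rw [shiftLat_eq_span, Submodule.span_le] at hv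
    have hi := Submodule.span_subset_span (PowerSeries R) (LaurentSeries R) _ (hv ⟨i, rfl⟩)
    have := Submodule.smul_mem _ (U R (-m)) hi
    rwa [← Pi.single_smul, smul_eq_mul, U_neg_mul_U, ← Pi.basisFun_apply (LaurentSeries R)] at this
  have hG : IsUnit G := by
    rw [← Matrix.mulVec_surjective_iff_isUnit]
    exact LinearMap.range_eq_top.1 (G.range_mulVecLin.trans htop)
  exact ⟨hG.unit, glLat_stdLat_eq_span _⟩

lemma IsLattice.exists_span_image_lsMapV_eq_glLat {L : Submodule (PowerSeries R) (V R n)}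
    (hL : IsLattice R n L) (p : PrimeSpectrum R) :
    ∃ f ∉ p.asIdeal, ∃ g : GL (Fin n) (LaurentSeries (Localization.Away f)),
      Submodule.span (PowerSeries (Localization.Away f))
          (lsMapV n (algebraMap R (Localization.Away f)) '' L) =
        glLat (Localization.Away f) n g (stdLat (Localization.Away f) n) := by
  obtain ⟨f, hfp, e, he⟩ := hL.exists_forall_pow_smul_mem_span_sup_smul p
  obtain ⟨N, hNL, hLN, -⟩ := hL
  have hspan := span_image_lsMapV_eq_span_range
    (IsLocalization.Away.algebraMap_isUnit (S := Localization.Away f) f) hNL hLN he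
  obtain ⟨g, hg⟩ := exists_glLat_stdLat_eq_span_range
    (hspan ▸ shiftLat_le_span_image_lsMapV (algebraMap R (Localization.Away f)) hNL)
  exact ⟨f, hfp, g, hspan.trans hg.symm⟩

end GeneralLinear

end Pap

open Pap in
/-- (i) Two elements of `GL_n(R((u)))` give the same translate of the standard lattice iff they
differ by an element of `GL_n(R[[u]])`; (ii) Zariski-locally on `R`, every lattice is a
`GL_n`-translate of the standard lattice. -/
theorem stmt5 (R : Type*) [CommRing R] (n : ℕ) (hn : 1 ≤ n)
    (L : Submodule (PowerSeries R) (V R n)) (hL : IsLattice R n L) :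
    (∀ g g' : GL (Fin n) (LaurentSeries R),
      glLat R n g (stdLat R n) = glLat R n g' (stdLat R n) ↔
        ((∀ i j, ((g⁻¹ * g' : GL (Fin n) (LaurentSeries R)) :
            Matrix (Fin n) (Fin n) (LaurentSeries R)) i j ∈ psRange R) ∧
         (∀ i j, ((g'⁻¹ * g : GL (Fin n) (LaurentSeries R)) :
            Matrix (Fin n) (Fin n) (LaurentSeries R)) i j ∈ psRange R))) ∧
    ∃ (m : ℕ) (fs : Fin m → R), Ideal.span (Set.range fs) = ⊤ ∧
      ∀ j : Fin m, ∃ g : GL (Fin n) (LaurentSeries (Localization.Away (fs j))),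
        Submodule.span (PowerSeries (Localization.Away (fs j)))
          ((fun x : V R n => fun i =>
              lsMap R (algebraMap R (Localization.Away (fs j))) (x i)) ''
            (L : Set (V R n)))
          = glLat (Localization.Away (fs j)) n g (stdLat (Localization.Away (fs j)) n) := by
  refine ⟨fun g g' => ?_,
    exists_fin_span_eq_top_of_forall_primeSpectrum hL.exists_span_image_lsMapV_eq_glLat⟩
  rw [le_antisymm_iff, glLat_le_glLat_iff, glLat_le_glLat_iff, glLat_stdLat_le_stdLat_iff,
    glLat_stdLat_le_stdLat_iff, and_comm]
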